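/- Theorem 3 (relaxation lower bound): assume at least one feasible association exists, and let p* = min over feasible associations x of (Σ_{i ∈ L} λ_i T_i(x)) / (Σ_{i ∈ L} λ_i) be the minimum average system delay. Let q* be the infimum of Σ_{j ∈ B} 1/(1 − σ_j(y)) over all fractional associations y (functions y : L × B → [0,1] with Σ_{j ∈ B} y_{ij} = 1 for every i ∈ L) satisfying σ_j(y) ≤ ρ̄ for all j ∈ B, where σ_j(y) = Σ_{i ∈ L} y_{ij} λ_i c_{ij}. Then (q* − |B|) / (Σ_{i ∈ L} λ_i) ≤ p*. -/

import Mathlib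

open Finset

/-- Load of base station `j` under association `x`: `ρ_j(x) = Σ_{i : x i = j} λ_i c_{ij}`. -/
noncomputable def bsLoad {L B : Type*} [Fintype L] [DecidableEq B] (lam : L → ℝ)
    (c : L → B → ℝ) (x : L → B) (j : B) : ℝ :=
  ∑ i ∈ univ.filter (fun i => x i = j), lam i * c i j

/-- Average delay of class `i` under association `x`: `T_i(x) = c_{i,x(i)} / (1 − ρ_{x(i)}(x))`. -/
noncomputable def classDelay {L B : Type*} [Fintype L] [DecidableEq B] (lam : L → ℝ)
    (c : L → B → ℝ) (x : L → B) (i : L) : ℝ :=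
  c i (x i) / (1 - bsLoad lam c x (x i))

/-- Maximum per-class delay `max_{i ∈ L} T_i(x)`. -/
noncomputable def maxDelay {L B : Type*} [Fintype L] [DecidableEq B] [Nonempty L]
    (lam : L → ℝ) (c : L → B → ℝ) (x : L → B) : ℝ :=
  univ.sup' univ_nonempty (fun i => classDelay lam c x i)

/-- Load of base station `j` under a fractional association `y`:
`σ_j(y) = Σ_{i ∈ L} y_{ij} λ_i c_{ij}`. -/
noncomputable def frLoad {L B : Type*} [Fintype L] (lam : L → ℝ) (c : L → B → ℝ)
    (y : L → B → ℝ) (j : B) : ℝ :=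
  ∑ i : L, y i j * (lam i * c i j)

/-!
Grouping the classes by the base station that serves them turns `∑ i, λ_i T_i(x)` into
`∑ j, ρ_j / (1 - ρ_j) = ∑ j, 1 / (1 - ρ_j) - |B|`. The 0-1 matrix of a feasible association `x` is a
feasible fractional association with the same loads, so `∑ j, 1 / (1 - ρ_j)` is one of the values
over which `q*` is the infimum.
-/

/-- The values taken by the objective `∑ j, 1 / (1 - σ_j(y))` of the relaxed problem on the
fractional associations `y` with all loads at most `ρbar`; the infimum of this set is `q*`. -/
def relaxedObjectiveValues {L B : Type*} [Fintype L] [Fintype B] (lam : L → ℝ) (c : L → B → ℝ)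
    (ρbar : ℝ) : Set ℝ :=
  {v : ℝ | ∃ y : L → B → ℝ,
    (∀ i j, 0 ≤ y i j ∧ y i j ≤ 1) ∧ (∀ i : L, ∑ j : B, y i j = 1) ∧
    (∀ j : B, frLoad lam c y j ≤ ρbar) ∧
    v = ∑ j : B, 1 / (1 - frLoad lam c y j)}

theorem sum_div_one_sub_eq {ι K : Type*} [Fintype ι] [DivisionRing K] {f : ι → K}
    (hf : ∀ j, f j ≠ 1) :
    ∑ j, f j / (1 - f j) = ∑ j, 1 / (1 - f j) - Fintype.card ι := by
  have term_eq (j : ι) : f j / (1 - f j) = 1 / (1 - f j) - 1 := by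
    rw [div_sub_one (sub_ne_zero.mpr (hf j).symm), sub_sub_cancel]
  simp only [term_eq, sum_sub_distrib, sum_const, card_univ, nsmul_one]

section

variable {L B : Type*} [Fintype L]

theorem frLoad_single [DecidableEq B] (lam : L → ℝ) (c : L → B → ℝ) (x : L → B) (j : B) :
    frLoad lam c (fun i => Pi.single (x i) 1) j = bsLoad lam c x j := by
  simp [frLoad, bsLoad, sum_filter, Pi.single_apply, eq_comm]

variable [Fintype B]

theorem bddBelow_relaxedObjectiveValues (lam : L → ℝ) (c : L → B → ℝ) {ρbar : ℝ} (hρ : ρbar < 1) :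
    BddBelow (relaxedObjectiveValues lam c ρbar) := by
  refine ⟨0, ?_⟩
  rintro _ ⟨y, -, -, hy, rfl⟩
  exact sum_nonneg fun j _ => one_div_nonneg.mpr (sub_nonneg.mpr ((hy j).trans hρ.le))

variable [DecidableEq B]

theorem sum_one_div_one_sub_bsLoad_mem_relaxedObjectiveValues {lam : L → ℝ} {c : L → B → ℝ}
    {ρbar : ℝ} {x : L → B} (hx : ∀ j, bsLoad lam c x j ≤ ρbar) :
    ∑ j, 1 / (1 - bsLoad lam c x j) ∈ relaxedObjectiveValues lam c ρbar := by
  have single_mem (i : L) : Pi.single (x i) (1 : ℝ) ∈ stdSimplex ℝ B :=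
    single_mem_stdSimplex ℝ (x i)
  refine ⟨fun i => Pi.single (x i) 1, fun i => mem_Icc_of_mem_stdSimplex (single_mem i),
    fun i => (single_mem i).2, ?_, ?_⟩
  · simpa only [frLoad_single] using hx
  · simp only [frLoad_single]

theorem sum_mul_classDelay_eq_sum_bsLoad_div (lam : L → ℝ) (c : L → B → ℝ) (x : L → B) :
    ∑ i, lam i * classDelay lam c x i = ∑ j, bsLoad lam c x j / (1 - bsLoad lam c x j) := by
  have fiber_sum (j : B) : ∑ i with x i = j, lam i * classDelay lam c x i =
      bsLoad lam c x j / (1 - bsLoad lam c x j) := by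
    calc ∑ i with x i = j, lam i * classDelay lam c x i
        = ∑ i with x i = j, lam i * c i j / (1 - bsLoad lam c x j) := by
          refine sum_congr rfl fun i hi => ?_
          obtain rfl : x i = j := (mem_filter.mp hi).2
          rw [classDelay, mul_div_assoc]
      _ = bsLoad lam c x j / (1 - bsLoad lam c x j) := (sum_div ..).symm
  rw [← sum_fiberwise univ x]
  exact sum_congr rfl fun j _ => fiber_sum j

theorem stmt14_general {lam : L → ℝ} (hlam : 0 < ∑ i, lam i) {c : L → B → ℝ} {ρbar : ℝ}
    (hρ : ρbar < 1) {x : L → B} (hx : ∀ j, bsLoad lam c x j ≤ ρbar) :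
    (sInf (relaxedObjectiveValues lam c ρbar) - Fintype.card B) / ∑ i, lam i ≤
      (∑ i, lam i * classDelay lam c x i) / ∑ i, lam i := by
  have load_ne_one (j : B) : bsLoad lam c x j ≠ 1 := ((hx j).trans_lt hρ).ne
  rw [sum_mul_classDelay_eq_sum_bsLoad_div, sum_div_one_sub_eq load_ne_one]
  gcongr
  exact csInf_le (bddBelow_relaxedObjectiveValues lam c hρ)
    (sum_one_div_one_sub_bsLoad_mem_relaxedObjectiveValues hx)

end

/-- Theorem 3 (relaxation lower bound): the optimal value of the relaxed problem `Q_delay`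
gives a lower bound on the minimum average system delay:
`(q* − |B|) / Σ_i λ_i ≤ p*`. -/
theorem stmt14 {L B : Type*} [Fintype L] [Fintype B] [DecidableEq B] [Nonempty L] [Nonempty B]
    (lam : L → ℝ) (hlam : ∀ i, 0 < lam i)
    (c : L → B → ℝ) (hc : ∀ i j, 0 < c i j)
    (ρbar : ℝ) (hρ0 : 0 < ρbar) (hρ1 : ρbar < 1)
    (hex : ∃ x : L → B, ∀ j : B, bsLoad lam c x j ≤ ρbar)
    (pstar : ℝ)
    (hp : IsLeast {v : ℝ | ∃ x : L → B, (∀ j : B, bsLoad lam c x j ≤ ρbar) ∧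
      v = (∑ i : L, lam i * classDelay lam c x i) / (∑ i : L, lam i)} pstar) :
    (sInf {v : ℝ | ∃ y : L → B → ℝ,
        (∀ i j, 0 ≤ y i j ∧ y i j ≤ 1) ∧ (∀ i : L, ∑ j : B, y i j = 1) ∧
        (∀ j : B, frLoad lam c y j ≤ ρbar) ∧
        v = ∑ j : B, 1 / (1 - frLoad lam c y j)}
      - (Fintype.card B : ℝ)) / (∑ i : L, lam i) ≤ pstar := by
  obtain ⟨⟨x, hx, rfl⟩, -⟩ := hp
  exact stmt14_general (sum_pos (fun i _ => hlam i) univ_nonempty) hρ1 hx
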